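/- The cubic polynomial z³ − 13z² + 46z − 32 has three distinct real roots, and every real number β satisfying β³ − 13β² + 46β − 32 = 0 satisfies (β² − 7β + 4)² − 16β < 0; equivalently, for every real root β of the cubic, the quadratic z² − ((β² − 7β + 4)/2)z + β has negative discriminant and hence no real roots. -/

import Mathlib

/-!
The cubic `f(z) = z³ − 13z² + 46z − 32` changes sign on each of the disjoint intervals
`(0, 1)`, `(4, 5)` and `(7, 8)`, so it has three distinct real roots. Division with remainder gives
`(z² − 7z + 4)² − 16z = (z − 1) f(z) − 2(z² − 3z + 8)`, and `z² − 3z + 8` is positive definite, so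
the left side is negative at every real root of `f`.
-/


/-- The cubic `z³ − 13z² + 46z − 32` has three distinct real
roots, and every real root `β` of it satisfies `(β² − 7β + 4)² − 16β < 0`;
equivalently, for every such `β` the quadratic `z² − ((β² − 7β + 4)/2)z + β` has
negative discriminant and hence no real roots. -/
theorem cubic_totally_real_and_quadratic_no_real_roots :
    (∃ a b c : ℝ, a ≠ b ∧ a ≠ c ∧ b ≠ c ∧
        a^3 - 13*a^2 + 46*a - 32 = 0 ∧
        b^3 - 13*b^2 + 46*b - 32 = 0 ∧
        c^3 - 13*c^2 + 46*c - 32 = 0) ∧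
      ∀ β : ℝ, β^3 - 13*β^2 + 46*β - 32 = 0 →
        (β^2 - 7*β + 4)^2 - 16*β < 0 ∧
          ∀ z : ℝ, z^2 - ((β^2 - 7*β + 4)/2)*z + β ≠ 0 := by
  have hcont : Continuous fun x : ℝ => x^3 - 13*x^2 + 46*x - 32 := by fun_prop
  refine ⟨?_, fun β hβ => ?_⟩
  · obtain ⟨a, ⟨-, ha⟩, hfa⟩ := intermediate_value_Icc (a := (0 : ℝ)) (b := 1) (by norm_num)
      hcont.continuousOn (show (0 : ℝ) ∈ _ by constructor <;> norm_num)
    obtain ⟨b, ⟨hb, hb'⟩, hfb⟩ := intermediate_value_Icc' (a := (4 : ℝ)) (b := 5) (by norm_num)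
      hcont.continuousOn (show (0 : ℝ) ∈ _ by constructor <;> norm_num)
    obtain ⟨c, ⟨hc, -⟩, hfc⟩ := intermediate_value_Icc (a := (7 : ℝ)) (b := 8) (by norm_num)
      hcont.continuousOn (show (0 : ℝ) ∈ _ by constructor <;> norm_num)
    exact ⟨a, b, c, (by linarith : a < b).ne, (by linarith : a < c).ne, (by linarith : b < c).ne,
      hfa, hfb, hfc⟩
  · have hdisc : (β^2 - 7*β + 4)^2 - 16*β < 0 := by
      have hrem : (β^2 - 7*β + 4)^2 - 16*β = -2 * (β^2 - 3*β + 8) := by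
        linear_combination (β - 1) * hβ
      rw [hrem]
      nlinarith [sq_nonneg (2*β - 3)]
    refine ⟨hdisc, fun z hz => ?_⟩
    have hsq : (4*z - (β^2 - 7*β + 4))^2 = (β^2 - 7*β + 4)^2 - 16*β := by
      linear_combination 16 * hz
    exact absurd (sq_nonneg (4*z - (β^2 - 7*β + 4))) (by rw [hsq]; exact not_le.mpr hdisc)
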